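/- arXiv:0812.4761 — 2 statements merged into one kernel-verified Lean document; each statement's English description precedes it below -/
import Mathlib

section
/- Let X be a compact metrizable space, T : X → X continuous with the measure-theoretic entropy map μ ↦ h_μ(T) finite and upper semi-continuous on the space M(X,T) of T-invariant Borel probability measures, and let φ ∈ C(X). Define U on the space of finite signed Borel measures by U(μ) = −∫φ dμ − h_μ(T) if μ ∈ M(X,T), and U(μ) = +∞ otherwise. Then U is convex, lower semi-continuous with values in (−∞, +∞], and its Legendre–Fenchel transform (with respect to the duality between signed measures and C(X)) is ψ ↦ P(T, φ+ψ). -/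
open MeasureTheory

/-!
The function `U` extends `f μ = -∫ φ dμ - h μ` by `+∞` along the weak*-continuous affine map sending
`μ` to the functional `∫ · dμ`. The set `M` of invariant probability measures is weak*-compact, so
the sublevel sets of `U` are images of the compact sublevel sets of `f` on `M`, hence closed.
Concavity of the entropy makes `f` convex along mixtures, which `U` inherits. In the
Legendre–Fenchel transform only functionals coming from `M` contribute, and there `L ψ - U L` is
`h μ + ∫ (φ + ψ) dμ`, whose supremum is the pressure by the variational principle.
-/

open Set
open scoped NNReal

/-- `U` is the extension by `+∞` of the function `f` on `s`, transported along `e`: its value at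
`e a` is `f a` for `a ∈ s`, and `⊤` off `e '' s`. Since `e` is allowed to be non-injective, this is
a predicate on `U`, forcing `f` to be constant on the fibres of `e` in `s`. -/
structure IsTopExtension {α β : Type*} (e : α → β) (s : Set α) (f : α → ℝ) (U : β → EReal) :
    Prop where
  apply_eq : ∀ ⦃a⦄, a ∈ s → U (e a) = f a
  eq_top : ∀ ⦃b⦄, b ∉ e '' s → U b = ⊤

theorem coe_mul_add_coe_mul_eq_top {t u : ℝ} (ht : 0 < t) (hu : 0 < u) {x y : EReal} (hx : x ≠ ⊥)
    (hy : y ≠ ⊥) (hxy : x = ⊤ ∨ y = ⊤) : (t : EReal) * x + u * y = ⊤ := by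
  have coe_mul_ne_bot {c : ℝ} (hc : 0 < c) {z : EReal} (hz : z ≠ ⊥) : (c : EReal) * z ≠ ⊥ := by
    simp [EReal.mul_ne_bot, hz, hc.le]
  rcases hxy with rfl | rfl
  · rw [EReal.coe_mul_top_of_pos ht, EReal.top_add_of_ne_bot (coe_mul_ne_bot hu hy)]
  · rw [EReal.coe_mul_top_of_pos hu, EReal.add_top_of_ne_bot (coe_mul_ne_bot ht hx)]

namespace IsTopExtension

variable {α β : Type*} {e : α → β} {s : Set α} {f : α → ℝ} {U : β → EReal}

theorem ne_bot (hU : IsTopExtension e s f U) (b : β) : U b ≠ ⊥ := by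
  by_cases hb : b ∈ e '' s
  · obtain ⟨a, ha, rfl⟩ := hb
    exact hU.apply_eq ha ▸ EReal.coe_ne_bot _
  · exact hU.eq_top hb ▸ top_ne_bot

theorem preimage_Iic_coe (hU : IsTopExtension e s f U) (c : ℝ) :
    U ⁻¹' Iic (c : EReal) = e '' (s ∩ f ⁻¹' Iic c) := by
  ext b
  constructor
  · intro hb
    by_cases hbs : b ∈ e '' s
    · obtain ⟨a, ha, rfl⟩ := hbs
      rw [mem_preimage, hU.apply_eq ha, mem_Iic, EReal.coe_le_coe_iff] at hb
      exact ⟨a, ⟨ha, hb⟩, rfl⟩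
    · rw [mem_preimage, hU.eq_top hbs, mem_Iic, top_le_iff] at hb
      exact absurd hb (EReal.coe_ne_top c)
  · rintro ⟨a, ⟨ha, hac⟩, rfl⟩
    rw [mem_preimage, hU.apply_eq ha]
    exact EReal.coe_le_coe hac

theorem lowerSemicontinuous [TopologicalSpace α] [TopologicalSpace β] [T2Space β]
    (hU : IsTopExtension e s f U) (hs : IsCompact s) (he : ContinuousOn e s)
    (hf : LowerSemicontinuousOn f s) : LowerSemicontinuous U := by
  rw [lowerSemicontinuous_iff_isClosed_preimage]
  intro c
  induction c with
  | bot =>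
    have preimage_bot : U ⁻¹' Iic ⊥ = ∅ := by
      ext b
      simpa using hU.ne_bot b
    exact preimage_bot ▸ isClosed_empty
  | top => simp only [Iic_top, preimage_univ, isClosed_univ]
  | coe c =>
    rw [hU.preimage_Iic_coe]
    exact ((hf.isCompact_inter_preimage_Iic hs c).image_of_continuousOn
      (he.mono inter_subset_left)).isClosed

theorem map_smul_add_smul_le [AddCommMonoid β] [Module ℝ β] (hU : IsTopExtension e s f U)
    (hf : ∀ a ∈ s, ∀ a' ∈ s, ∀ t u : ℝ, 0 ≤ t → 0 ≤ u → t + u = 1 →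
      ∃ c ∈ s, e c = t • e a + u • e a' ∧ f c ≤ t * f a + u * f a')
    (b b' : β) (t u : ℝ) (ht : 0 ≤ t) (hu : 0 ≤ u) (htu : t + u = 1) :
    U (t • b + u • b') ≤ t * U b + u * U b' := by
  rcases ht.eq_or_lt with rfl | ht_pos
  · obtain rfl : u = 1 := by simpa using htu
    simp
  rcases hu.eq_or_lt with rfl | hu_pos
  · obtain rfl : t = 1 := by simpa using htu
    simp
  by_cases h : b ∈ e '' s ∧ b' ∈ e '' s
  · obtain ⟨⟨a, ha, rfl⟩, ⟨a', ha', rfl⟩⟩ := h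
    obtain ⟨c, hc, hec, hfc⟩ := hf a ha a' ha' t u ht hu htu
    rw [← hec, hU.apply_eq hc, hU.apply_eq ha, hU.apply_eq ha']
    exact_mod_cast hfc
  · have top_of_notMem : U b = ⊤ ∨ U b' = ⊤ := (not_and_or.mp h).imp (hU.eq_top ·) (hU.eq_top ·)
    rw [coe_mul_add_coe_mul_eq_top ht_pos hu_pos (hU.ne_bot b) (hU.ne_bot b') top_of_notMem]
    exact le_top

theorem iSup_coe_sub_eq_of_isLUB (hU : IsTopExtension e s f U) {g : β → ℝ} {p : ℝ}
    (hp : IsLUB ((fun a ↦ g (e a) - f a) '' s) p) : ⨆ b, ((g b : EReal) - U b) = p := by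
  have sub_apply {a : α} (ha : a ∈ s) : (g (e a) : EReal) - U (e a) = (g (e a) - f a : ℝ) := by
    rw [hU.apply_eq ha, EReal.coe_sub]
  refine IsLUB.iSup_eq ⟨forall_mem_range.mpr fun b ↦ ?_, fun q hq ↦ ?_⟩
  · by_cases hb : b ∈ e '' s
    · obtain ⟨a, ha, rfl⟩ := hb
      rw [sub_apply ha]
      exact EReal.coe_le_coe (hp.1 (mem_image_of_mem _ ha))
    · rw [hU.eq_top hb, EReal.sub_top]
      exact bot_le
  · have le_q {a : α} (ha : a ∈ s) : ((g (e a) - f a : ℝ) : EReal) ≤ q :=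
      sub_apply ha ▸ hq (mem_range_self (e a))
    induction q with
    | bot =>
      obtain ⟨a, ha⟩ := hp.nonempty.of_image
      exact absurd (le_bot_iff.mp (le_q ha)) (EReal.coe_ne_bot _)
    | top => exact le_top
    | coe q => exact EReal.coe_le_coe (hp.2 (forall_mem_image.mpr fun _ ha ↦ mod_cast le_q ha))

end IsTopExtension

section IntegralWeakDual

variable {X : Type*} [TopologicalSpace X] [CompactSpace X] [MeasurableSpace X]
  [OpensMeasurableSpace X]

theorem integrable_continuousMap (μ : Measure X) [IsFiniteMeasure μ] (ψ : C(X, ℝ)) :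
    Integrable ψ μ :=
  ψ.continuous.integrable_of_hasCompactSupport (.of_compactSpace _)

/-- The functional `ψ ↦ ∫ ψ dμ` on `C(X)`, through which the finite measure `μ` is viewed as an
element of the weak* dual. -/
noncomputable def integralWeakDual (μ : Measure X) [IsFiniteMeasure μ] : WeakDual ℝ C(X, ℝ) :=
  StrongDual.toWeakDual <| LinearMap.mkContinuous
    { toFun ψ := ∫ x, ψ x ∂μ
      map_add' ψ χ :=
        integral_add (integrable_continuousMap μ ψ) (integrable_continuousMap μ χ)
      map_smul' c ψ := integral_const_mul c ψ }
    (μ.real univ) fun ψ ↦ by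
      rw [mul_comm]
      exact norm_integral_le_of_norm_le_const (.of_forall ψ.norm_coe_le_norm)

theorem integralWeakDual_apply (μ : Measure X) [IsFiniteMeasure μ] (ψ : C(X, ℝ)) :
    integralWeakDual μ ψ = ∫ x, ψ x ∂μ := rfl

theorem integralWeakDual_add (μ ν : Measure X) [IsFiniteMeasure μ] [IsFiniteMeasure ν] :
    integralWeakDual (μ + ν) = integralWeakDual μ + integralWeakDual ν :=
  DFunLike.ext (F := WeakDual ℝ C(X, ℝ)) _ _ fun ψ ↦
    integral_add_measure (integrable_continuousMap μ ψ) (integrable_continuousMap ν ψ)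

theorem integralWeakDual_smul (c : ℝ≥0) (μ : Measure X) [IsFiniteMeasure μ] :
    integralWeakDual (c • μ) = (c : ℝ) • integralWeakDual μ :=
  DFunLike.ext (F := WeakDual ℝ C(X, ℝ)) _ _ fun ψ ↦ integral_smul_nnreal_measure ψ c

theorem continuous_integralWeakDual :
    Continuous fun μ : ProbabilityMeasure X ↦ integralWeakDual (μ : Measure X) :=
  WeakDual.continuous_of_continuous_eval ProbabilityMeasure.continuous_integral_continuousMap

end IntegralWeakDual

section Mixture

variable {X : Type*} [MeasurableSpace X]

/-- The convex combination `a • μ + b • ν`, as a probability measure (the type of probability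
measures carries no module structure). -/
noncomputable def mixture (a b : ℝ≥0) (hab : a + b = 1) (μ ν : ProbabilityMeasure X) :
    ProbabilityMeasure X :=
  ⟨a • (μ : Measure X) + b • (ν : Measure X), ⟨by
    simp only [Measure.add_apply, Measure.smul_apply, measure_univ, ENNReal.smul_def, smul_eq_mul,
      mul_one]
    exact_mod_cast hab⟩⟩

theorem integralWeakDual_mixture [TopologicalSpace X] [CompactSpace X] [OpensMeasurableSpace X]
    (a b : ℝ≥0) (hab : a + b = 1) (μ ν : ProbabilityMeasure X) :
    integralWeakDual (mixture a b hab μ ν : Measure X) =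
      (a : ℝ) • integralWeakDual (μ : Measure X) + (b : ℝ) • integralWeakDual (ν : Measure X) := by
  rw [← integralWeakDual_smul, ← integralWeakDual_smul, ← integralWeakDual_add]
  rfl

theorem map_mixture_eq {T : X → X} (hT : Measurable T) {μ ν : ProbabilityMeasure X}
    (hμ : (μ : Measure X).map T = μ) (hν : (ν : Measure X).map T = ν) (a b : ℝ≥0)
    (hab : a + b = 1) :
    (mixture a b hab μ ν : Measure X).map T = mixture a b hab μ ν := by
  change Measure.map T (a • (μ : Measure X) + b • (ν : Measure X)) = a • μ + b • ν
  rw [Measure.map_add _ _ hT, Measure.map_smul, Measure.map_smul, hμ, hν]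

end Mixture

theorem isClosed_setOf_map_eq {X : Type*} [TopologicalSpace X] [HasOuterApproxClosed X]
    [MeasurableSpace X] [BorelSpace X] {T : X → X} (hT : Continuous T) :
    IsClosed {μ : ProbabilityMeasure X | (μ : Measure X).map T = μ} := by
  have map_eq_iff (μ : ProbabilityMeasure X) :
      μ.map hT.measurable.aemeasurable = μ ↔ (μ : Measure X).map T = μ :=
    ProbabilityMeasure.toMeasure_injective.eq_iff.symm
  simp only [← map_eq_iff]
  exact isClosed_eq (ProbabilityMeasure.continuous_map hT) continuous_id

section Entropy

variable {X : Type*} [TopologicalSpace X] [CompactSpace X] [MeasurableSpace X]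
  [OpensMeasurableSpace X] {M : Set (ProbabilityMeasure X)} {h : ProbabilityMeasure X → ℝ}

theorem lowerSemicontinuousOn_neg_integral_sub (h_usc : UpperSemicontinuousOn h M) (φ : C(X, ℝ)) :
    LowerSemicontinuousOn
      (fun μ : ProbabilityMeasure X ↦ -∫ x, φ x ∂(μ : Measure X) - h μ) M := by
  simp only [sub_eq_add_neg]
  refine LowerSemicontinuousOn.add ?_ ?_
  · exact (ProbabilityMeasure.continuous_integral_continuousMap φ).neg.lowerSemicontinuous
      |>.lowerSemicontinuousOn M
  · intro μ hμ y hy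
    filter_upwards [h_usc μ hμ (-y) (lt_neg_of_lt_neg hy)] with ν hν
    exact lt_neg_of_lt_neg hν

theorem neg_integral_sub_mixture_le (φ : C(X, ℝ)) {μ ν : ProbabilityMeasure X} {a b : ℝ≥0}
    {hab : a + b = 1} (h_concave : a * h μ + b * h ν ≤ h (mixture a b hab μ ν)) :
    -∫ x, φ x ∂(mixture a b hab μ ν : Measure X) - h (mixture a b hab μ ν) ≤
      a * (-∫ x, φ x ∂(μ : Measure X) - h μ) + b * (-∫ x, φ x ∂(ν : Measure X) - h ν) := by
  have integral_mixture : ∫ x, φ x ∂(mixture a b hab μ ν : Measure X) =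
      a * ∫ x, φ x ∂(μ : Measure X) + b * ∫ x, φ x ∂(ν : Measure X) :=
    DFunLike.congr_fun (integralWeakDual_mixture a b hab μ ν) φ
  rw [integral_mixture]
  linarith

theorem stmt_2_general (hM : IsCompact M)
    (hM_mix : ∀ μ ∈ M, ∀ ν ∈ M, ∀ (a b : ℝ≥0) (hab : a + b = 1), mixture a b hab μ ν ∈ M)
    (h_usc : UpperSemicontinuousOn h M)
    (h_concave : ∀ μ ∈ M, ∀ ν ∈ M, ∀ (a b : ℝ≥0) (hab : a + b = 1),
      a * h μ + b * h ν ≤ h (mixture a b hab μ ν))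
    {P : C(X, ℝ) → ℝ}
    (hP : ∀ ψ : C(X, ℝ), IsLUB
      {r : ℝ | ∃ μ : ProbabilityMeasure X, μ ∈ M ∧ r = h μ + ∫ x, ψ x ∂(μ : Measure X)} (P ψ))
    {φ : C(X, ℝ)} {U : WeakDual ℝ C(X, ℝ) → EReal}
    (hU : IsTopExtension (fun μ : ProbabilityMeasure X ↦ integralWeakDual (μ : Measure X)) M
      (fun μ ↦ -∫ x, φ x ∂(μ : Measure X) - h μ) U) :
    (∀ L, U L ≠ ⊥) ∧
    (∀ L L' : WeakDual ℝ C(X, ℝ), ∀ a b : ℝ, 0 ≤ a → 0 ≤ b → a + b = 1 →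
      U (a • L + b • L') ≤ (a : EReal) * U L + (b : EReal) * U L') ∧
    LowerSemicontinuous U ∧
    (∀ ψ : C(X, ℝ),
      (⨆ L : WeakDual ℝ C(X, ℝ), ((L ψ : EReal) - U L)) = ((P (φ + ψ) : ℝ) : EReal)) := by
  refine ⟨hU.ne_bot, hU.map_smul_add_smul_le fun μ hμ ν hν a b ha hb hab ↦ ?_,
    hU.lowerSemicontinuous hM continuous_integralWeakDual.continuousOn
      (lowerSemicontinuousOn_neg_integral_sub h_usc φ),
    fun ψ ↦ hU.iSup_coe_sub_eq_of_isLUB (g := (· ψ)) ?_⟩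
  · lift a to ℝ≥0 using ha
    lift b to ℝ≥0 using hb
    replace hab : a + b = 1 := mod_cast hab
    exact ⟨mixture a b hab μ ν, hM_mix μ hμ ν hν a b hab, integralWeakDual_mixture a b hab μ ν,
      neg_integral_sub_mixture_le φ (h_concave μ hμ ν hν a b hab)⟩
  · have value_eq (μ : ProbabilityMeasure X) :
        integralWeakDual (μ : Measure X) ψ - (-∫ x, φ x ∂(μ : Measure X) - h μ) =
          h μ + ∫ x, (φ + ψ) x ∂(μ : Measure X) := by
      simp only [← integralWeakDual_apply, map_add]
      ring
    simpa only [value_eq, image, eq_comm] using hP (φ + ψ)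

end Entropy

/-- With entropy finite, affine and upper semicontinuous on the set of
invariant measures, and pressure `P` characterized by the variational principle, the
function `U` (equal to `−∫φ dμ − h_μ(T)` on invariant probability measures, viewed inside
the dual of `C(X)` -- i.e. the space of finite signed Borel measures with the weak*
topology -- and `+∞` elsewhere) is convex, lower semicontinuous, `> −∞`, and its
Legendre–Fenchel transform is `ψ ↦ P(T, φ+ψ)`. -/
theorem stmt_2 {X : Type*} [MetricSpace X] [CompactSpace X] [MeasurableSpace X] [BorelSpace X]
    (T : X → X) (hT : Continuous T)
    (hent : ProbabilityMeasure X → ℝ)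
    (hent_usc : UpperSemicontinuousOn hent
      {μ : ProbabilityMeasure X | (μ : Measure X).map T = (μ : Measure X)})
    (hent_affine : ∀ μ ν ρ : ProbabilityMeasure X,
      (μ : Measure X).map T = (μ : Measure X) → (ν : Measure X).map T = (ν : Measure X) →
      (ρ : Measure X).map T = (ρ : Measure X) → ∀ a b : NNReal, a + b = 1 →
      (ρ : Measure X) = a • (μ : Measure X) + b • (ν : Measure X) →
      hent ρ = a * hent μ + b * hent ν)
    (P : C(X, ℝ) → ℝ)
    (hP : ∀ ψ : C(X, ℝ), IsLUB {r : ℝ | ∃ μ : ProbabilityMeasure X,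
        (μ : Measure X).map T = (μ : Measure X) ∧
        r = hent μ + ∫ x, ψ x ∂(μ : Measure X)} (P ψ))
    (φ : C(X, ℝ))
    (U : WeakDual ℝ C(X, ℝ) → EReal)
    (hU1 : ∀ (L : WeakDual ℝ C(X, ℝ)) (μ : ProbabilityMeasure X),
        (μ : Measure X).map T = (μ : Measure X) →
        (∀ ψ : C(X, ℝ), L ψ = ∫ x, ψ x ∂(μ : Measure X)) →
        U L = ((- ∫ x, φ x ∂(μ : Measure X) - hent μ : ℝ) : EReal))
    (hU2 : ∀ L : WeakDual ℝ C(X, ℝ),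
        (¬ ∃ μ : ProbabilityMeasure X, (μ : Measure X).map T = (μ : Measure X) ∧
          ∀ ψ : C(X, ℝ), L ψ = ∫ x, ψ x ∂(μ : Measure X)) → U L = ⊤) :
    (∀ L, U L ≠ ⊥) ∧
    (∀ L L' : WeakDual ℝ C(X, ℝ), ∀ a b : ℝ, 0 ≤ a → 0 ≤ b → a + b = 1 →
      U (a • L + b • L') ≤ (a : EReal) * U L + (b : EReal) * U L') ∧
    LowerSemicontinuous U ∧
    (∀ ψ : C(X, ℝ),
      (⨆ L : WeakDual ℝ C(X, ℝ), ((L ψ : EReal) - U L)) = ((P (φ + ψ) : ℝ) : EReal)) :=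
  stmt_2_general (isClosed_setOf_map_eq hT).isCompact
    (fun _ hμ _ hν ↦ map_mixture_eq hT.measurable hμ hν) hent_usc
    (fun μ hμ ν hν a b hab ↦ (hent_affine μ ν _ hμ hν
      (map_mixture_eq hT.measurable hμ hν a b hab) a b hab rfl).ge) hP
    ⟨fun μ hμ ↦ hU1 _ μ hμ (integralWeakDual_apply (μ : Measure X)), fun L hL ↦
      hU2 L fun ⟨μ, hμ, hLμ⟩ ↦ hL ⟨μ, hμ, DFunLike.ext _ L fun ψ ↦ (hLμ ψ).symm⟩⟩
end

section
/- Let T be a rational map of degree at least two and φ : J(T) → ℝ continuous. Then there exist λ > 0 and a Borel probability measure η supported on the Julia set J(T) such that ℒ_φ* η = λ η, where ℒ_φ is the Ruelle–Perron–Frobenius transfer operator. -/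
open MeasureTheory

/-- The Ruelle–Perron–Frobenius transfer operator
`ℒ_φ(ψ)(x) = Σ_{y ∈ T⁻¹(x)} deg_T(y) exp(φ(y)) ψ(y)`. -/
noncomputable def transferOp {X : Type*} (T : X → X) (deg : X → ℕ) (φ : X → ℝ)
    (ψ : X → ℝ) (x : X) : ℝ :=
  ∑ᶠ y ∈ T ⁻¹' {x}, (deg y : ℝ) * Real.exp (φ y) * ψ y

/-!
Let `L` be a positive operator on `C(X, ℝ)` and let `lam` be the infimum of those `s` for which
some strictly positive `g` satisfies `L g ≤ s • g`. No `h` satisfies `L h < lam * h` pointwise: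
the strict inequality would persist for `s` near `lam`; for `s` slightly above `lam` a maximum
principle would force `h` to be strictly positive, and then any `s` slightly below `lam` would
contradict the infimum. Hence the range of `L - lam • id` misses the open cone of strictly positive
functions, and Hahn–Banach yields a positive functional vanishing on that range. By
Riesz–Markov–Kakutani it is integration against a measure, which is the required eigenmeasure.
This replaces the Schauder–Tychonoff fixed point theorem.
-/

section PositiveOperators

open Filter Topology

theorem eq_zero_of_bounded_below_on_submodule {𝕜 E : Type*} [Field 𝕜] [LinearOrder 𝕜]
    [IsStrictOrderedRing 𝕜] [AddCommGroup E] [Module 𝕜 E] {G : E →ₗ[𝕜] 𝕜} {V : Submodule 𝕜 E}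
    {u : 𝕜} (hG : ∀ v ∈ V, u ≤ G v) {v : E} (hv : v ∈ V) : G v = 0 := by
  by_contra hne
  have h := hG (((u - 1) / G v) • v) (V.smul_mem _ hv)
  rw [map_smul, smul_eq_mul, div_mul_cancel₀ _ hne] at h
  linarith

variable {X : Type*} [TopologicalSpace X]

theorem convex_setOf_forall_pos : Convex ℝ {f : C(X, ℝ) | ∀ x, 0 < f x} :=
  fun _ hf _ hg _ _ ha hb hab x => convex_Ioi (0 : ℝ) (hf x) (hg x) ha hb hab

theorem functional_nonneg_of_pos {G : C(X, ℝ) →ₗ[ℝ] ℝ}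
    (hG : ∀ f : C(X, ℝ), (∀ x, 0 < f x) → 0 < G f) {f : C(X, ℝ)} (hf : 0 ≤ f) : 0 ≤ G f := by
  have hG1 : 0 < G 1 := hG 1 fun _ => one_pos
  by_contra! hneg
  have hε : 0 < -G f / G 1 := div_pos (neg_pos.2 hneg) hG1
  have hpos : 0 < G (f + (-G f / G 1) • 1) :=
    hG _ fun x => add_pos_of_nonneg_of_pos (hf x) (by simpa using hε)
  rw [map_add, map_smul, smul_eq_mul, div_mul_cancel₀ _ hG1.ne'] at hpos
  linarith

/-- The set of Collatz–Wielandt upper bounds of a positive operator `L` on `C(X, ℝ)`: those `s`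
for which `L` has a strictly positive `s`-supersolution. Its infimum is an eigenvalue of the
adjoint of `L`. -/
def collatzWielandtSet (L : C(X, ℝ) →ₚ[ℝ] C(X, ℝ)) : Set ℝ :=
  {s | ∃ g : C(X, ℝ), (∀ x, 0 < g x) ∧ L g ≤ s • g}

theorem collatzWielandtSet_bddBelow [Nonempty X] (L : C(X, ℝ) →ₚ[ℝ] C(X, ℝ)) :
    BddBelow (collatzWielandtSet L) := by
  refine ⟨0, fun s ⟨g, hg, hLg⟩ => ?_⟩
  obtain ⟨x⟩ := ‹Nonempty X›
  have hLg_nonneg : 0 ≤ L g x := map_nonneg L (fun y => (hg y).le) x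
  exact nonneg_of_mul_nonneg_left (hLg_nonneg.trans (hLg x)) (hg x)

variable [CompactSpace X]

theorem isOpen_setOf_forall_pos : IsOpen {f : C(X, ℝ) | ∀ x, 0 < f x} := by
  simpa [Set.MapsTo] using
    ContinuousMap.isOpen_setOfPred_mapsTo (X := X) isCompact_univ (isOpen_Ioi (a := (0 : ℝ)))

theorem functional_pos_of_map_one {F : C(X, ℝ) →ₚ[ℝ] ℝ} (hF : F 1 = 1) {f : C(X, ℝ)}
    (hf : ∀ x, 0 < f x) : 0 < F f := by
  obtain ⟨c, hc, hcf⟩ :=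
    isCompact_univ.exists_forall_le' f.continuous.continuousOn fun x _ => hf x
  have hle : c • (1 : C(X, ℝ)) ≤ f := fun x => by simpa using hcf x trivial
  calc
    0 < c := hc
    _ = F (c • 1) := by rw [map_smul, hF, smul_eq_mul, mul_one]
    _ ≤ F f := OrderHomClass.mono F hle

theorem exists_positive_functional_eq_zero_on {V : Submodule ℝ C(X, ℝ)}
    (hV : ∀ f ∈ V, ¬ ∀ x, 0 < f x) :
    ∃ F : C(X, ℝ) →ₚ[ℝ] ℝ, F 1 = 1 ∧ ∀ f ∈ V, F f = 0 := by
  obtain ⟨G, u, hG_pos, hG_V⟩ := geometric_hahn_banach_open convex_setOf_forall_pos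
    isOpen_setOf_forall_pos V.convex (Set.disjoint_left.2 fun f hf hfV => hV f hfV hf)
  have hG_zero : ∀ f ∈ V, G f = 0 := fun _ =>
    eq_zero_of_bounded_below_on_submodule (G := G.toLinearMap) hG_V
  have hu : u ≤ 0 := by simpa using hG_V 0 V.zero_mem
  have hG_neg : ∀ f : C(X, ℝ), (∀ x, 0 < f x) → G f < 0 := fun f hf =>
    (hG_pos f hf).trans_le hu
  have hG1 : G 1 < 0 := hG_neg 1 fun _ => one_pos
  refine ⟨.mk₀ ((G 1)⁻¹ • G.toLinearMap) fun f => functional_nonneg_of_pos fun f hf => ?_,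
    inv_mul_cancel₀ hG1.ne, fun f hf => ?_⟩
  · exact mul_pos_of_neg_of_neg (inv_lt_zero.2 hG1) (hG_neg f hf)
  · exact mul_eq_zero_of_right _ (hG_zero f hf)

theorem collatzWielandtSet_nonempty (L : C(X, ℝ) →ₚ[ℝ] C(X, ℝ)) :
    (collatzWielandtSet L).Nonempty :=
  ⟨‖L 1‖, 1, fun _ => one_pos, fun x => by simpa using (L 1).apply_le_norm x⟩

-- Otherwise `c = min (h / g) ≤ 0` is attained at some `x`, and `h - c • g ≥ 0` gives
-- `L h x ≥ c * L g x ≥ c * s * g x = s * h x`.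
theorem forall_pos_of_forall_apply_lt {L : C(X, ℝ) →ₚ[ℝ] C(X, ℝ)} {s : ℝ} {g h : C(X, ℝ)}
    (hg : ∀ x, 0 < g x) (hLg : L g ≤ s • g) (hLh : ∀ x, L h x < s * h x) : ∀ x, 0 < h x := by
  by_contra! ⟨x₁, hx₁⟩
  have : Nonempty X := ⟨x₁⟩
  obtain ⟨x, -, hx⟩ := isCompact_univ.exists_isMinOn Set.univ_nonempty
    (h.continuous.div g.continuous fun y => (hg y).ne').continuousOn
  set c := h x / g x
  have hc : c ≤ 0 := (hx (Set.mem_univ x₁)).trans (div_nonpos_of_nonpos_of_nonneg hx₁ (hg x₁).le)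
  have hch : c • g ≤ h := fun y => (le_div_iff₀ (hg y)).1 (hx (Set.mem_univ y))
  have hle : s * h x ≤ L h x := calc
    s * h x = c * (s * g x) := by rw [← div_mul_cancel₀ (h x) (hg x).ne']; ring
    _ ≤ c * L g x := mul_le_mul_of_nonpos_left (hLg x) hc
    _ = L (c • g) x := by rw [map_smul, ContinuousMap.smul_apply, smul_eq_mul]
    _ ≤ L h x := OrderHomClass.mono L hch x
  exact hle.not_gt (hLh x)

theorem eventually_forall_apply_lt {f h : C(X, ℝ)} {s : ℝ} (hs : ∀ x, f x < s * h x) :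
    ∀ᶠ t in 𝓝 s, ∀ x, f x < t * h x := by
  have hcont : Continuous fun t : ℝ => t • h - f := by fun_prop
  have hmem : s • h - f ∈ {k : C(X, ℝ) | ∀ x, 0 < k x} := fun x => sub_pos.2 (hs x)
  filter_upwards [hcont.continuousAt (isOpen_setOf_forall_pos.mem_nhds hmem)] with t ht x
  exact sub_pos.1 (ht x)

theorem not_forall_apply_lt_sInf_collatzWielandtSet [Nonempty X] (L : C(X, ℝ) →ₚ[ℝ] C(X, ℝ))
    (h : C(X, ℝ)) : ¬ ∀ x, L h x < sInf (collatzWielandtSet L) * h x := by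
  intro hlt
  have hne := collatzWielandtSet_nonempty L
  have hglb := isGLB_csInf hne (collatzWielandtSet_bddBelow L)
  set lam := sInf (collatzWielandtSet L)
  have hnear := eventually_forall_apply_lt hlt
  have hh : ∀ x, 0 < h x := by
    obtain ⟨s, ⟨g, hg, hLg⟩, hs⟩ := ((hglb.frequently_mem hne).and_eventually
      (hnear.filter_mono nhdsWithin_le_nhds)).exists
    exact forall_pos_of_forall_apply_lt hg hLg hs
  obtain ⟨t, ht, ht_lt⟩ : ∃ t, (∀ x, L h x < t * h x) ∧ t < lam :=
    ((hnear.filter_mono nhdsWithin_le_nhds).and (self_mem_nhdsWithin (s := Set.Iio lam))).exists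
  exact ht_lt.not_ge (hglb.1 ⟨h, hh, fun x => (ht x).le⟩)

theorem exists_positive_eigenfunctional [Nonempty X] (L : C(X, ℝ) →ₚ[ℝ] C(X, ℝ)) :
    ∃ (lam : ℝ) (F : C(X, ℝ) →ₚ[ℝ] ℝ), F 1 = 1 ∧ ∀ f, F (L f) = lam * F f := by
  set lam := sInf (collatzWielandtSet L)
  have hrange : ∀ f ∈ LinearMap.range (L.toLinearMap - lam • LinearMap.id),
      ¬ ∀ x, 0 < f x := by
    rintro _ ⟨h, rfl⟩ hpos
    refine not_forall_apply_lt_sInf_collatzWielandtSet L (-h) fun x => ?_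
    rw [map_neg, ContinuousMap.neg_apply, ContinuousMap.neg_apply, mul_neg, neg_lt_neg_iff]
    exact sub_pos.1 (hpos x)
  obtain ⟨F, hF1, hF⟩ := exists_positive_functional_eq_zero_on hrange
  refine ⟨lam, F, hF1, fun f => sub_eq_zero.1 ?_⟩
  rw [← smul_eq_mul, ← map_smul, ← map_sub]
  exact hF _ (LinearMap.mem_range_self _ f)

variable [T2Space X] [MeasurableSpace X] [BorelSpace X]

theorem exists_probabilityMeasure_integral_eq {F : C(X, ℝ) →ₚ[ℝ] ℝ} (hF : F 1 = 1) :
    ∃ η : ProbabilityMeasure X, ∀ ψ : C(X, ℝ), ∫ x, ψ x ∂(η : Measure X) = F ψ := by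
  let Λ : CompactlySupportedContinuousMap X ℝ →ₚ[ℝ] ℝ :=
    { toFun := fun f => F f.toContinuousMap
      map_add' := fun f g => map_add F f.toContinuousMap g.toContinuousMap
      map_smul' := fun c f => map_smul F c f.toContinuousMap
      monotone' := fun _ _ hfg => OrderHomClass.mono F hfg }
  have hΛ (ψ : C(X, ℝ)) : ∫ x, ψ x ∂(RealRMK.rieszMeasure Λ) = F ψ :=
    RealRMK.integral_rieszMeasure Λ (CompactlySupportedContinuousMap.continuousMapEquiv ψ)
  have hprob : IsProbabilityMeasure (RealRMK.rieszMeasure Λ) := by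
    rw [isProbabilityMeasure_iff_real]
    simpa [hF] using hΛ 1
  exact ⟨⟨RealRMK.rieszMeasure Λ, hprob⟩, hΛ⟩

theorem exists_probabilityMeasure_integral_apply_eq_mul [Nonempty X]
    {L : C(X, ℝ) →ₚ[ℝ] C(X, ℝ)} (hL : ∀ x, 0 < L 1 x) :
    ∃ (lam : ℝ) (η : ProbabilityMeasure X), 0 < lam ∧
      ∀ ψ : C(X, ℝ), ∫ x, L ψ x ∂(η : Measure X) = lam * ∫ x, ψ x ∂(η : Measure X) := by
  obtain ⟨lam, F, hF1, hFL⟩ := exists_positive_eigenfunctional L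
  obtain ⟨η, hη⟩ := exists_probabilityMeasure_integral_eq hF1
  have hlam : lam = F (L 1) := by rw [hFL, hF1, mul_one]
  refine ⟨lam, η, hlam ▸ functional_pos_of_map_one hF1 hL, fun ψ => ?_⟩
  rw [hη, hη, hFL]

end PositiveOperators

section TransferOperator

variable {X : Type*} {T : X → X} {deg : X → ℕ} {φ : X → ℝ}

theorem transferOp_add {x : X} (hx : (T ⁻¹' {x}).Finite) (ψ₁ ψ₂ : X → ℝ) :
    transferOp T deg φ (ψ₁ + ψ₂) x = transferOp T deg φ ψ₁ x + transferOp T deg φ ψ₂ x := by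
  simp only [transferOp, Pi.add_apply, mul_add, finsum_mem_add_distrib hx]

theorem transferOp_smul (c : ℝ) (ψ : X → ℝ) (x : X) :
    transferOp T deg φ (c • ψ) x = c * transferOp T deg φ ψ x := by
  simp only [transferOp, Pi.smul_apply, smul_eq_mul, mul_left_comm _ c, mul_finsum_mem]

theorem transferOp_nonneg {ψ : X → ℝ} (hψ : 0 ≤ ψ) (x : X) : 0 ≤ transferOp T deg φ ψ x :=
  finsum_nonneg fun y => finsum_nonneg fun _ => mul_nonneg (by positivity) (hψ y)

theorem transferOp_pos {x : X} (hx : (T ⁻¹' {x}).Finite) (hx_ne : (T ⁻¹' {x}).Nonempty)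
    (hdeg : ∀ y, 1 ≤ deg y) {ψ : X → ℝ} (hψ : ∀ y, 0 < ψ y) : 0 < transferOp T deg φ ψ x := by
  rw [transferOp, finsum_mem_eq_finite_toFinset_sum _ hx]
  refine Finset.sum_pos (fun y _ => ?_) (hx.toFinset_nonempty.2 hx_ne)
  have hdeg_pos : (0 : ℝ) < deg y := Nat.cast_pos.2 (hdeg y)
  have hψ_pos := hψ y
  positivity

/-- The transfer operator as a positive operator on `C(X, ℝ)`, for a map with finite fibres whose
transfer operator preserves continuity. -/
noncomputable def transferPositiveLinearMap [TopologicalSpace X] (hfib : ∀ x, (T ⁻¹' {x}).Finite)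
    (hL : ∀ ψ : C(X, ℝ), Continuous (transferOp T deg φ ψ)) : C(X, ℝ) →ₚ[ℝ] C(X, ℝ) :=
  .mk₀
    { toFun := fun ψ => ⟨transferOp T deg φ ψ, hL ψ⟩
      map_add' := fun ψ₁ ψ₂ => ContinuousMap.ext fun x => transferOp_add (hfib x) ψ₁ ψ₂
      map_smul' := fun c ψ => ContinuousMap.ext fun x => transferOp_smul c ψ x }
    fun _ hψ => transferOp_nonneg hψ

end TransferOperator

theorem stmt_9_general {X : Type*} [TopologicalSpace X] [CompactSpace X] [T2Space X] [Nonempty X]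
    [MeasurableSpace X] [BorelSpace X]
    (T : X → X) (deg : X → ℕ) (hdeg : ∀ y, 1 ≤ deg y)
    (hfib : ∀ x, (T ⁻¹' {x}).Finite) (hfibne : ∀ x, (T ⁻¹' {x}).Nonempty)
    (φ : X → ℝ) (hL : ∀ ψ : C(X, ℝ), Continuous (transferOp T deg φ ψ)) :
    ∃ (lam : ℝ) (η : ProbabilityMeasure X), 0 < lam ∧
      ∀ ψ : C(X, ℝ), ∫ x, transferOp T deg φ ψ x ∂(η : Measure X) =
        lam * ∫ x, ψ x ∂(η : Measure X) :=
  exists_probabilityMeasure_integral_apply_eq_mul (L := transferPositiveLinearMap hfib hL)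
    fun x => transferOp_pos (hfib x) (hfibne x) hdeg fun _ => one_pos

/-- For a rational-like map `T` acting on its (compact) Julia set, with
local degree function `deg`, finite nonempty fibers, and transfer operator `ℒ_φ`
preserving continuity, there exist `λ > 0` and a Borel probability measure `η` with
`ℒ_φ* η = λ η` (expressed weakly against continuous test functions). -/
theorem stmt_9 {X : Type*} [MetricSpace X] [CompactSpace X] [Nonempty X]
    [MeasurableSpace X] [BorelSpace X]
    (T : X → X) (hT : Continuous T)
    (deg : X → ℕ) (hdeg : ∀ y, 1 ≤ deg y)
    (hfib : ∀ x, (T ⁻¹' {x}).Finite) (hfibne : ∀ x, (T ⁻¹' {x}).Nonempty)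
    (φ : C(X, ℝ))
    (hL : ∀ ψ : C(X, ℝ), Continuous (transferOp T deg ⇑φ ⇑ψ)) :
    ∃ (lam : ℝ) (η : ProbabilityMeasure X), 0 < lam ∧
      ∀ ψ : C(X, ℝ), ∫ x, transferOp T deg ⇑φ ⇑ψ x ∂(η : Measure X) =
        lam * ∫ x, ψ x ∂(η : Measure X) :=
  stmt_9_general T deg hdeg hfib hfibne φ hL
end
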